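/- arXiv:2504.21430 — 3 statements merged into one kernel-verified Lean document; each statement's English description precedes it below -/
import Mathlib

section
/- Let d ≥ 1 and 1 ≤ β < α < 2. Then for every x ∈ ℝ^d the integral ∫_{|z|>1} (V_β(x+z) − V_β(x)) |z|^{−(α+d)} dz is absolutely convergent and satisfies ∫_{|z|>1} (V_β(x+z) − V_β(x)) |z|^{−(α+d)} dz ≤ β σ_{d−1} ( |x|^{β−1}/(α−1) + 1/(α−β) ). -/
open MeasureTheory
open scoped RealInnerProductSpace

/-! The radial profile `t ↦ (1 + t²)^(β/2)` of `V_β` has derivative at most `β t^(β-1)`, so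
`|V_β(x+z) - V_β(x)| ≤ β (|x| + |z|)^(β-1) |z| ≤ β (|x|^(β-1) |z| + |z|^β)`, by subadditivity of
`t ↦ t^(β-1)`. Against the kernel `|z|^(-(α+d))` the two terms decay like `|z|^(-(s+d))` with
`s = α - 1` and `s = α - β`, and in polar coordinates each integrates to `σ_{d-1} / s`. -/

open Set Module

section BracketPow

/-- The weight `V_p(x) = (1 + |x|²)^(p/2)`, that is, the `p`-th power of the Japanese bracket of
`x`. Negative `p` are allowed, so that the derivative of a weight on `ℝ` is expressed by another
weight. -/
noncomputable def bracketPow {E : Type*} [Norm E] (p : ℝ) (x : E) : ℝ :=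
  (1 + ‖x‖ ^ 2) ^ (p / 2)

variable {E : Type*} [SeminormedAddCommGroup E] {p β : ℝ}

theorem bracketPow_nonneg (p : ℝ) (x : E) : 0 ≤ bracketPow p x :=
  Real.rpow_nonneg (by positivity) _

theorem bracketPow_norm (p : ℝ) (x : E) : bracketPow p ‖x‖ = bracketPow p x := by
  simp only [bracketPow, norm_norm]

theorem measurable_bracketPow [MeasurableSpace E] [OpensMeasurableSpace E] (p : ℝ) :
    Measurable (bracketPow p : E → ℝ) := by
  unfold bracketPow
  fun_prop

theorem hasDerivAt_bracketPow (p t : ℝ) :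
    HasDerivAt (bracketPow p) (p * (t * bracketPow (p - 2) t)) t := by
  have hsq : HasDerivAt (fun t : ℝ ↦ 1 + ‖t‖ ^ 2) (2 * t) t := by
    simpa using (hasDerivAt_pow 2 t).const_add 1
  convert! hsq.rpow_const (p := p / 2) (Or.inl (by positivity)) using 1
  rw [bracketPow, sub_div, div_self two_ne_zero]
  ring

theorem norm_mul_bracketPow_le (hp : p ≤ 0) (x : E) :
    ‖x‖ * bracketPow p x ≤ ‖x‖ ^ (p + 1) := by
  rcases (norm_nonneg x).eq_or_lt' with hx | hx
  · simpa only [hx, zero_mul] using Real.rpow_nonneg le_rfl (p + 1)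
  · calc ‖x‖ * bracketPow p x
        ≤ ‖x‖ * (‖x‖ ^ 2) ^ (p / 2) := by
          gcongr
          exact Real.rpow_le_rpow_of_nonpos (by positivity) (by linarith) (by linarith)
      _ = ‖x‖ ^ (p + 1) := by
          rw [← Real.rpow_natCast_mul hx.le, Nat.cast_ofNat, mul_div_cancel₀ _ two_ne_zero,
            Real.rpow_add_one hx.ne', mul_comm]

theorem abs_bracketPow_sub_le {R a b : ℝ} (hβ : β ∈ Icc 1 2) (ha : a ∈ Icc 0 R)
    (hb : b ∈ Icc 0 R) :
    |bracketPow β b - bracketPow β a| ≤ β * R ^ (β - 1) * |b - a| := by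
  refine (convex_Icc 0 R).norm_image_sub_le_of_norm_hasDerivWithin_le
    (fun t _ ↦ (hasDerivAt_bracketPow β t).hasDerivWithinAt) ?_ ha hb
  rintro t ⟨ht₀, htR⟩
  obtain ⟨hβ₁, hβ₂⟩ := hβ
  have hβ₀ : 0 ≤ β := by linarith
  have hderiv : t * bracketPow (β - 2) t ≤ R ^ (β - 1) := calc
    t * bracketPow (β - 2) t ≤ t ^ (β - 2 + 1) := by
      simpa only [Real.norm_of_nonneg ht₀] using norm_mul_bracketPow_le (sub_nonpos.2 hβ₂) t
    _ = t ^ (β - 1) := by ring_nf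
    _ ≤ R ^ (β - 1) := Real.rpow_le_rpow ht₀ htR (sub_nonneg.2 hβ₁)
  rw [Real.norm_of_nonneg (mul_nonneg hβ₀ (mul_nonneg ht₀ (bracketPow_nonneg _ t)))]
  gcongr

theorem abs_bracketPow_add_sub_le (hβ : β ∈ Icc 1 2) (x z : E) :
    |bracketPow β (x + z) - bracketPow β x| ≤ β * (‖x‖ ^ (β - 1) + ‖z‖ ^ (β - 1)) * ‖z‖ := by
  have hβ₀ : 0 ≤ β := zero_le_one.trans hβ.1
  calc |bracketPow β (x + z) - bracketPow β x|
      ≤ β * (‖x‖ + ‖z‖) ^ (β - 1) * |‖x + z‖ - ‖x‖| := by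
        simpa only [bracketPow_norm] using abs_bracketPow_sub_le hβ
          ⟨norm_nonneg x, le_add_of_nonneg_right (norm_nonneg z)⟩
          ⟨norm_nonneg (x + z), norm_add_le x z⟩
    _ ≤ β * (‖x‖ ^ (β - 1) + ‖z‖ ^ (β - 1)) * ‖z‖ := by
        gcongr
        · exact Real.rpow_add_le_add_rpow (norm_nonneg x) (norm_nonneg z)
            (by linarith [hβ.1]) (by linarith [hβ.2])
        · simpa only [add_sub_cancel_left] using abs_norm_sub_norm_le (x + z) x

theorem norm_bracketPow_add_sub_mul_rpow_le (hβ : β ∈ Icc 1 2) (q : ℝ) (x : E) {z : E}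
    (hz : 0 < ‖z‖) :
    ‖(bracketPow β (x + z) - bracketPow β x) * ‖z‖ ^ q‖ ≤
      β * ‖x‖ ^ (β - 1) * ‖z‖ ^ (q + 1) + β * ‖z‖ ^ (q + β) := by
  have hβz : ‖z‖ ^ β = ‖z‖ ^ (β - 1) * ‖z‖ := by
    rw [← Real.rpow_add_one hz.ne', sub_add_cancel]
  rw [norm_mul, Real.norm_eq_abs, Real.norm_of_nonneg (Real.rpow_nonneg hz.le q)]
  calc |bracketPow β (x + z) - bracketPow β x| * ‖z‖ ^ q
      ≤ β * (‖x‖ ^ (β - 1) + ‖z‖ ^ (β - 1)) * ‖z‖ * ‖z‖ ^ q := by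
        gcongr
        exact abs_bracketPow_add_sub_le hβ x z
    _ = β * ‖x‖ ^ (β - 1) * ‖z‖ ^ (q + 1) + β * ‖z‖ ^ (q + β) := by
        rw [Real.rpow_add_one hz.ne', Real.rpow_add hz, hβz]
        ring

end BracketPow

section Radial

variable {E F : Type*} [NormedAddCommGroup E] [NormedSpace ℝ E] [FiniteDimensional ℝ E]
  [Nontrivial E] [MeasurableSpace E] [BorelSpace E] (μ : Measure E) [μ.IsAddHaarMeasure]
  [NormedAddCommGroup F] [NormedSpace ℝ F] {r s : ℝ}

theorem measurableSet_setOf_lt_norm {E : Type*} [NormedAddCommGroup E] [MeasurableSpace E]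
    [OpensMeasurableSpace E] (r : ℝ) : MeasurableSet {z : E | r < ‖z‖} :=
  measurableSet_lt measurable_const measurable_norm

theorem indicator_setOf_lt_norm {E F : Type*} [Norm E] [Zero F] (f : ℝ → F) (r : ℝ) :
    {z : E | r < ‖z‖}.indicator (fun z ↦ f ‖z‖) = fun z ↦ (Ioi r).indicator f ‖z‖ :=
  funext fun _ ↦ indicator_comp_right norm

theorem integrableOn_lt_norm_fun_norm_iff (hr : 0 ≤ r) {f : ℝ → F} :
    IntegrableOn (fun z : E ↦ f ‖z‖) {z | r < ‖z‖} μ ↔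
      IntegrableOn (fun t ↦ t ^ (finrank ℝ E - 1) • f t) (Ioi r) := by
  rw [← integrable_indicator_iff (measurableSet_setOf_lt_norm r), indicator_setOf_lt_norm,
    integrable_fun_norm_addHaar, ← indicator_smul, IntegrableOn,
    integrable_indicator_iff measurableSet_Ioi, IntegrableOn,
    Measure.restrict_restrict_of_subset (Ioi_subset_Ioi hr), IntegrableOn]

theorem setIntegral_lt_norm_fun_norm (hr : 0 ≤ r) (f : ℝ → F) :
    ∫ z in {z : E | r < ‖z‖}, f ‖z‖ ∂μ =
      μ.toSphere.real univ • ∫ t in Ioi r, t ^ (finrank ℝ E - 1) • f t := by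
  rw [← integral_indicator (measurableSet_setOf_lt_norm r), indicator_setOf_lt_norm,
    integral_fun_norm_addHaar, ← indicator_smul, setIntegral_indicator measurableSet_Ioi,
    inter_eq_right.2 (Ioi_subset_Ioi hr), μ.toSphere_real_apply_univ, mul_smul,
    Nat.cast_smul_eq_nsmul]

theorem eqOn_pow_pred_smul_rpow_neg_add {n : ℕ} (hn : 0 < n) (s : ℝ) :
    EqOn (fun t : ℝ ↦ t ^ (n - 1) • t ^ (-(s + n))) (fun t ↦ t ^ (-s - 1)) (Ioi 0) := by
  intro t (ht : 0 < t)
  simp only [smul_eq_mul]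
  rw [← Real.rpow_natCast, ← Real.rpow_add ht, Nat.cast_pred hn]
  ring_nf

theorem integrableOn_lt_norm_rpow (hr : 0 < r) (hs : 0 < s) :
    IntegrableOn (fun z : E ↦ ‖z‖ ^ (-(s + finrank ℝ E))) {z | r < ‖z‖} μ := by
  rw [integrableOn_lt_norm_fun_norm_iff μ hr.le (f := fun t ↦ t ^ (-(s + finrank ℝ E))),
    integrableOn_congr_fun ((eqOn_pow_pred_smul_rpow_neg_add finrank_pos s).mono
      (Ioi_subset_Ioi hr.le)) measurableSet_Ioi]
  exact integrableOn_Ioi_rpow_of_lt (by linarith) hr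

theorem setIntegral_lt_norm_rpow (hr : 0 < r) (hs : 0 < s) :
    ∫ z in {z : E | r < ‖z‖}, ‖z‖ ^ (-(s + finrank ℝ E)) ∂μ =
      μ.toSphere.real univ * (r ^ (-s) / s) := by
  rw [setIntegral_lt_norm_fun_norm μ hr.le (fun t ↦ t ^ (-(s + finrank ℝ E))),
    setIntegral_congr_fun measurableSet_Ioi
      ((eqOn_pow_pred_smul_rpow_neg_add finrank_pos s).mono (Ioi_subset_Ioi hr.le)),
    integral_Ioi_rpow_of_lt (by linarith) hr, sub_add_cancel, neg_div_neg_eq, smul_eq_mul]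

end Radial

theorem volume_toSphere_real_univ {E : Type*} [NormedAddCommGroup E] [InnerProductSpace ℝ E]
    [FiniteDimensional ℝ E] [Nontrivial E] [MeasurableSpace E] [BorelSpace E] :
    (volume : Measure E).toSphere.real univ =
      2 * Real.pi ^ ((finrank ℝ E : ℝ) / 2) / Real.Gamma ((finrank ℝ E : ℝ) / 2) := by
  have hdim : (0 : ℝ) < finrank ℝ E := Nat.cast_pos.2 finrank_pos
  have hsqrt : √Real.pi ^ finrank ℝ E = Real.pi ^ ((finrank ℝ E : ℝ) / 2) := by
    rw [Real.sqrt_eq_rpow, ← Real.rpow_mul_natCast Real.pi_pos.le, one_div_mul_eq_div]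
  rw [Measure.toSphere_real_apply_univ, Measure.real, InnerProductSpace.volume_ball, hsqrt,
    Real.Gamma_add_one (by positivity), ENNReal.ofReal_one, one_pow, one_mul,
    ENNReal.toReal_ofReal (by positivity)]
  field_simp

theorem stmt4_general {E : Type*} [NormedAddCommGroup E] [NormedSpace ℝ E]
    [FiniteDimensional ℝ E] [Nontrivial E] [MeasurableSpace E] [BorelSpace E] (μ : Measure E)
    [μ.IsAddHaarMeasure] {α β r : ℝ} (hβ : β ∈ Icc 1 2) (hβα : β < α) (hr : 0 < r) (x : E) :
    IntegrableOn
      (fun z ↦ (bracketPow β (x + z) - bracketPow β x) * ‖z‖ ^ (-(α + finrank ℝ E)))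
      {z | r < ‖z‖} μ ∧
    ∫ z in {z | r < ‖z‖},
        ‖(bracketPow β (x + z) - bracketPow β x) * ‖z‖ ^ (-(α + finrank ℝ E))‖ ∂μ
      ≤ β * μ.toSphere.real univ *
          (‖x‖ ^ (β - 1) * (r ^ (1 - α) / (α - 1)) + r ^ (β - α) / (α - β)) := by
  have hα₁ : 0 < α - 1 := by linarith [hβ.1]
  have hαβ : 0 < α - β := sub_pos.2 hβα
  have hint₁ := (integrableOn_lt_norm_rpow μ hr hα₁).const_mul (β * ‖x‖ ^ (β - 1))
  have hint₂ := (integrableOn_lt_norm_rpow μ hr hαβ).const_mul β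
  have hbound : ∀ z ∈ {z : E | r < ‖z‖},
      ‖(bracketPow β (x + z) - bracketPow β x) * ‖z‖ ^ (-(α + finrank ℝ E))‖ ≤
        β * ‖x‖ ^ (β - 1) * ‖z‖ ^ (-(α - 1 + finrank ℝ E)) +
          β * ‖z‖ ^ (-(α - β + finrank ℝ E)) := fun z hz ↦ by
    convert norm_bracketPow_add_sub_mul_rpow_le hβ (-(α + finrank ℝ E)) x (hr.trans hz) using 4
      <;> ring
  have hmeas : Measurable
      fun z ↦ (bracketPow β (x + z) - bracketPow β x) * ‖z‖ ^ (-(α + finrank ℝ E)) :=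
    (((measurable_bracketPow β).comp (measurable_const_add x)).sub_const _).mul
      (measurable_norm.pow_const _)
  have hint := (hint₁.add hint₂).mono' hmeas.aestronglyMeasurable
    (ae_restrict_of_forall_mem (measurableSet_setOf_lt_norm r) hbound)
  refine ⟨hint, (setIntegral_mono_on hint.norm (hint₁.add hint₂)
    (measurableSet_setOf_lt_norm r) hbound).trans_eq ?_⟩
  rw [integral_add' hint₁ hint₂, integral_const_mul, integral_const_mul,
    setIntegral_lt_norm_rpow μ hr hα₁, setIntegral_lt_norm_rpow μ hr hαβ, neg_sub, neg_sub]
  ring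

/-- For `1 ≤ β < α < 2` and any `x ∈ ℝ^d`, the large-jump integral
`∫_{|z|>1} (V_β(x+z) - V_β(x)) |z|^{-(α+d)} dz` is absolutely convergent and bounded above by
`β σ_{d-1} (|x|^{β-1}/(α-1) + 1/(α-β))`, where `V_β(x) = (1+|x|²)^{β/2}` and
`σ_{d-1} = 2π^{d/2}/Γ(d/2)`. -/
theorem stmt4 (d : ℕ) (hd : 1 ≤ d) (α β : ℝ) (hβ1 : 1 ≤ β) (hβα : β < α) (hα2 : α < 2)
    (x : EuclideanSpace ℝ (Fin d)) :
    IntegrableOn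
      (fun z : EuclideanSpace ℝ (Fin d) =>
        ((1 + ‖x + z‖ ^ 2) ^ (β / 2) - (1 + ‖x‖ ^ 2) ^ (β / 2)) * ‖z‖ ^ (-(α + d)))
      {z : EuclideanSpace ℝ (Fin d) | 1 < ‖z‖} ∧
    ∫ z in {z : EuclideanSpace ℝ (Fin d) | 1 < ‖z‖},
        ((1 + ‖x + z‖ ^ 2) ^ (β / 2) - (1 + ‖x‖ ^ 2) ^ (β / 2)) * ‖z‖ ^ (-(α + d))
      ≤ β * (2 * Real.pi ^ ((d : ℝ) / 2) / Real.Gamma ((d : ℝ) / 2)) *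
          (‖x‖ ^ (β - 1) / (α - 1) + 1 / (α - β)) := by
  have : Nonempty (Fin d) := ⟨⟨0, hd⟩⟩
  have h := stmt4_general volume ⟨hβ1, (hβα.trans hα2).le⟩ hβα one_pos x
  simp only [volume_toSphere_real_univ, finrank_euclideanSpace_fin, Real.one_rpow,
    mul_one_div] at h
  exact ⟨h.1, (Real.le_norm_self _).trans ((norm_integral_le_integral_norm _).trans h.2)⟩
end

section
/- Let d ≥ 1, α ∈ (1,2), and let b : ℝ^d → ℝ^d satisfy Assumption (A) with parameter θ ≥ 0. Fix β ∈ [1,α) and define, for x ∈ ℝ^d, A V_β(x) = ⟨b(x), ∇V_β(x)⟩ + C_{d,α} ∫_{ℝ^d∖{0}} ( V_β(x+z) − V_β(x) − ⟨∇V_β(x), z⟩ 𝟙_{(0,1)}(|z|) ) |z|^{−(α+d)} dz, where the integral is absolutely convergent. Then there exist constants C₁ > 0 and C₂ > 0 such that A V_β(x) ≤ −C₁ V_β(x)^{1+θ/β} + C₂ for every x ∈ ℝ^d. -/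
open MeasureTheory
open scoped RealInnerProductSpace

/-! Write `V = V_β`. The tangent of `u ↦ u ^ (β / 2)` at `1 + ‖x‖ ^ 2` shows that the compensated
increment of `V` over a jump `z` is `O(‖z‖ ^ 2)` for small jumps, uniformly in `x`, and
subadditivity of the same power shows that `V (x + z) - V x` is `O(√(V x) ‖z‖ ^ β)` for large jumps.
Hence for every Lévy measure with a finite `β`-th moment at infinity the nonlocal part of the
generator is `O(√V)`, while dissipativity gives a drift part of at most
`-c V ^ (1 + θ / β) + O(√V)`. Since `1 + θ / β > 1 / 2`, the leading term absorbs the errors. -/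

open scoped Gradient

section Rpow

lemma abs_rpow_sub_rpow_le {a b p : ℝ} (ha : 0 ≤ a) (hb : 0 ≤ b) (hp0 : 0 ≤ p) (hp1 : p ≤ 1) :
    |a ^ p - b ^ p| ≤ |a - b| ^ p := by
  wlog hab : b ≤ a generalizing a b
  · rw [abs_sub_comm, abs_sub_comm a b]
    exact this hb ha (le_of_not_ge hab)
  rw [abs_of_nonneg (sub_nonneg.2 hab),
    abs_of_nonneg (sub_nonneg.2 (Real.rpow_le_rpow hb hab hp0)), sub_le_iff_le_add]
  simpa only [sub_add_cancel] using Real.rpow_add_le_add_rpow (sub_nonneg.2 hab) hb hp0 hp1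

lemma add_rpow_le_two_rpow_mul {a b p : ℝ} (ha : 0 ≤ a) (hb : 0 ≤ b) (hp : 0 ≤ p) :
    (a + b) ^ p ≤ 2 ^ p * (a ^ p + b ^ p) := by
  wlog hab : b ≤ a generalizing a b
  · rw [add_comm a, add_comm (a ^ p)]
    exact this hb ha (le_of_not_ge hab)
  calc (a + b) ^ p ≤ (2 * a) ^ p := by gcongr; linarith
    _ = 2 ^ p * a ^ p := Real.mul_rpow zero_le_two ha
    _ ≤ 2 ^ p * (a ^ p + b ^ p) := by gcongr; exact le_add_of_nonneg_right (by positivity)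

lemma one_add_mul_sub_mul_sq_le_rpow_one_add {s p : ℝ} (hs : -1 < s) (hp0 : 0 ≤ p) (hp1 : p ≤ 1) :
    1 + p * s - (1 - p) * s ^ 2 ≤ (1 + s) ^ p := by
  have hs0 : 0 < 1 + s := by linarith
  have hpos : 0 < (1 + s) ^ (1 - p) := by positivity
  have bernoulli : (1 + s) ^ (1 - p) ≤ 1 + (1 - p) * s :=
    rpow_one_add_le_one_add_mul_self hs.le (by linarith) (by linarith)
  have hreciprocal : (1 - (1 - p) * s) * (1 + s) ^ (1 - p) ≤ 1 := by
    nlinarith [sq_nonneg ((1 - p) * s), sq_nonneg ((1 + s) ^ (1 - p) - 1)]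
  have hsplit : (1 + s) ^ p = (1 + s) / (1 + s) ^ (1 - p) := by
    rw [eq_div_iff hpos.ne', ← Real.rpow_add hs0, add_sub_cancel, Real.rpow_one]
  rw [hsplit, le_div_iff₀ hpos]
  calc (1 + p * s - (1 - p) * s ^ 2) * (1 + s) ^ (1 - p)
      = (1 + s) * ((1 - (1 - p) * s) * (1 + s) ^ (1 - p)) := by ring
    _ ≤ 1 + s := mul_le_of_le_one_right hs0.le hreciprocal

lemma abs_rpow_sub_rpow_sub_mul_le {a b p : ℝ} (ha : 0 < a) (hb : 0 < b) (hp0 : 0 ≤ p)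
    (hp1 : p ≤ 1) :
    |b ^ p - a ^ p - p * a ^ (p - 1) * (b - a)| ≤ (1 - p) * a ^ (p - 2) * (b - a) ^ 2 := by
  obtain ⟨s, hs, rfl⟩ : ∃ s, -1 < s ∧ b = a * (1 + s) :=
    ⟨b / a - 1, by linarith [div_pos hb ha], by field_simp; ring⟩
  have hlower := one_add_mul_sub_mul_sq_le_rpow_one_add hs hp0 hp1
  have hupper := rpow_one_add_le_one_add_mul_self hs.le hp0 hp1
  have hfactor : (a * (1 + s)) ^ p - a ^ p - p * a ^ (p - 1) * (a * (1 + s) - a) =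
      a ^ p * ((1 + s) ^ p - 1 - p * s) := by
    rw [Real.mul_rpow ha.le (by linarith), Real.rpow_sub_one ha.ne']
    field_simp
    ring
  have hremainder : (1 - p) * a ^ (p - 2) * (a * (1 + s) - a) ^ 2 =
      a ^ p * ((1 - p) * s ^ 2) := by
    rw [Real.rpow_sub ha, Real.rpow_two]
    field_simp
    ring
  rw [hfactor, hremainder, abs_mul, abs_of_pos (by positivity : 0 < a ^ p)]
  gcongr
  have : 0 ≤ (1 - p) * s ^ 2 := mul_nonneg (by linarith) (sq_nonneg s)
  exact abs_le.2 ⟨by linarith, by linarith⟩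

lemma exists_mul_rpow_le_mul_rpow_add {p q ε : ℝ} (hp : 0 ≤ p) (hpq : p < q) (hε : 0 < ε) (D : ℝ) :
    ∃ K, 0 < K ∧ ∀ w, 0 ≤ w → D * w ^ p ≤ ε * w ^ q + K := by
  set W := (|D| / ε) ^ (q - p)⁻¹
  refine ⟨|D| * W ^ p + 1, by positivity, fun w hw => ?_⟩
  refine (mul_le_mul_of_nonneg_right (le_abs_self D) (by positivity)).trans ?_
  rcases le_or_gt w W with hwW | hWw
  · have hbounded : |D| * w ^ p ≤ |D| * W ^ p := by gcongr
    linarith [show 0 ≤ ε * w ^ q by positivity]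
  · have hw0 : 0 < w := (show 0 ≤ W by positivity).trans_lt hWw
    have hdominated : |D| ≤ ε * w ^ (q - p) := by
      rw [← div_le_iff₀' hε]
      exact (Real.rpow_inv_le_iff_of_pos (by positivity) hw (by linarith)).1 hWw.le
    calc |D| * w ^ p ≤ ε * w ^ (q - p) * w ^ p := by gcongr
      _ = ε * w ^ q := by rw [mul_assoc, ← Real.rpow_add hw0, sub_add_cancel]
      _ ≤ ε * w ^ q + (|D| * W ^ p + 1) := le_add_of_nonneg_right (by positivity)

end Rpow

section Lyapunov

variable {E : Type*} [NormedAddCommGroup E]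

/-- The Lyapunov function `V_β` of the paper. -/
noncomputable def lyapunov (β : ℝ) (x : E) : ℝ := (1 + ‖x‖ ^ 2) ^ (β / 2)

lemma lyapunov_nonneg (β : ℝ) (x : E) : 0 ≤ lyapunov β x := by
  unfold lyapunov
  positivity

lemma one_le_lyapunov {β : ℝ} (hβ : 0 ≤ β) (x : E) : 1 ≤ lyapunov β x :=
  Real.one_le_rpow (le_add_of_nonneg_right (sq_nonneg _)) (by linarith)

lemma continuous_lyapunov (β : ℝ) : Continuous (lyapunov β : E → ℝ) :=
  Continuous.rpow_const (by fun_prop) fun x => .inl (by positivity)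

lemma sqrt_lyapunov (β : ℝ) (x : E) : √(lyapunov β x) = √(1 + ‖x‖ ^ 2) ^ (β / 2) := by
  rw [lyapunov, Real.sqrt_eq_rpow, Real.sqrt_eq_rpow, ← Real.rpow_mul (by positivity),
    ← Real.rpow_mul (by positivity), mul_comm]

lemma norm_le_sqrt_one_add_norm_sq (x : E) : ‖x‖ ≤ √(1 + ‖x‖ ^ 2) :=
  Real.le_sqrt_of_sq_le (by linarith)

lemma one_le_sqrt_one_add_norm_sq (x : E) : 1 ≤ √(1 + ‖x‖ ^ 2) :=
  Real.one_le_sqrt.2 (by linarith [sq_nonneg ‖x‖])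

lemma abs_norm_add_sq_sub_norm_sq_le (x z : E) :
    |‖x + z‖ ^ 2 - ‖x‖ ^ 2| ≤ ‖z‖ * (2 * ‖x‖ + ‖z‖) := by
  have hdiff : |‖x + z‖ - ‖x‖| ≤ ‖z‖ := by
    simpa only [add_sub_cancel_left] using abs_norm_sub_norm_le (x + z) x
  have hsum : ‖x + z‖ + ‖x‖ ≤ 2 * ‖x‖ + ‖z‖ := by linarith [norm_add_le x z]
  rw [sq_sub_sq, abs_mul, abs_of_nonneg (add_nonneg (norm_nonneg _) (norm_nonneg _)), mul_comm]
  gcongr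

lemma sq_norm_add_sq_sub_norm_sq_le (x : E) {z : E} (hz : ‖z‖ ≤ 1) :
    (‖x + z‖ ^ 2 - ‖x‖ ^ 2) ^ 2 ≤ 5 * (1 + ‖x‖ ^ 2) * ‖z‖ ^ 2 := by
  rw [← sq_abs]
  calc |‖x + z‖ ^ 2 - ‖x‖ ^ 2| ^ 2 ≤ (‖z‖ * (2 * ‖x‖ + 1)) ^ 2 := by
        gcongr
        exact (abs_norm_add_sq_sub_norm_sq_le x z).trans (by gcongr)
    _ = (2 * ‖x‖ + 1) ^ 2 * ‖z‖ ^ 2 := by ring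
    _ ≤ 5 * (1 + ‖x‖ ^ 2) * ‖z‖ ^ 2 := by
        gcongr
        nlinarith [sq_nonneg (‖x‖ - 2)]

lemma abs_norm_add_sq_sub_norm_sq_le_of_one_le (x : E) {z : E} (hz : 1 ≤ ‖z‖) :
    |‖x + z‖ ^ 2 - ‖x‖ ^ 2| ≤ 3 * √(1 + ‖x‖ ^ 2) * ‖z‖ ^ 2 :=
  calc |‖x + z‖ ^ 2 - ‖x‖ ^ 2| ≤ ‖z‖ * (2 * ‖x‖ + ‖z‖) := abs_norm_add_sq_sub_norm_sq_le x z
    _ ≤ ‖z‖ * (2 * (√(1 + ‖x‖ ^ 2) * ‖z‖) + √(1 + ‖x‖ ^ 2) * ‖z‖) := by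
      gcongr
      · exact (norm_le_sqrt_one_add_norm_sq x).trans (le_mul_of_one_le_right (by positivity) hz)
      · exact le_mul_of_one_le_left (by positivity) (one_le_sqrt_one_add_norm_sq x)
    _ = 3 * √(1 + ‖x‖ ^ 2) * ‖z‖ ^ 2 := by ring

lemma norm_sq_rpow_half (x : E) (p : ℝ) : (‖x‖ ^ 2) ^ (p / 2) = ‖x‖ ^ p := by
  rw [Real.rpow_div_two_eq_sqrt p (sq_nonneg ‖x‖), Real.sqrt_sq (norm_nonneg x)]

lemma lyapunov_le {p : ℝ} (hp : 0 ≤ p) (x : E) : lyapunov p x ≤ 2 ^ (p / 2) * (1 + ‖x‖ ^ p) := by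
  simpa only [lyapunov, Real.one_rpow, norm_sq_rpow_half] using
    add_rpow_le_two_rpow_mul (p := p / 2) zero_le_one (sq_nonneg ‖x‖) (by positivity)

lemma abs_lyapunov_add_sub_le {β : ℝ} (hβ0 : 0 ≤ β) (hβ2 : β ≤ 2) (x : E) {z : E} (hz : 1 ≤ ‖z‖) :
    |lyapunov β (x + z) - lyapunov β x| ≤ 3 * √(lyapunov β x) * ‖z‖ ^ β :=
  calc |lyapunov β (x + z) - lyapunov β x|
      ≤ |(1 + ‖x + z‖ ^ 2) - (1 + ‖x‖ ^ 2)| ^ (β / 2) :=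
        abs_rpow_sub_rpow_le (by positivity) (by positivity) (by linarith) (by linarith)
    _ ≤ (3 * √(1 + ‖x‖ ^ 2) * ‖z‖ ^ 2) ^ (β / 2) := by
      rw [add_sub_add_left_eq_sub]
      gcongr
      exact abs_norm_add_sq_sub_norm_sq_le_of_one_le x hz
    _ = 3 ^ (β / 2) * √(lyapunov β x) * ‖z‖ ^ β := by
      rw [Real.mul_rpow (by positivity) (by positivity),
        Real.mul_rpow (by norm_num) (by positivity), sqrt_lyapunov, norm_sq_rpow_half]
    _ ≤ 3 * √(lyapunov β x) * ‖z‖ ^ β := by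
      gcongr
      exact Real.rpow_le_self_of_one_le (by norm_num) (by linarith)

variable [InnerProductSpace ℝ E] [CompleteSpace E]

lemma hasGradientAt_lyapunov (β : ℝ) (x : E) :
    HasGradientAt (lyapunov β) ((β * (1 + ‖x‖ ^ 2) ^ ((β - 2) / 2)) • x) x := by
  have hderiv := ((hasStrictFDerivAt_norm_sq x).hasFDerivAt.const_add 1).rpow_const (p := β / 2)
    (.inl (by positivity))
  refine hasGradientAt_iff_hasFDerivAt.2 (hderiv.congr_fderiv ?_)
  ext z
  simp only [smul_apply, InnerProductSpace.toDual_apply_apply, real_inner_smul_left,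
    innerSL_apply_apply, smul_eq_mul, nsmul_eq_mul, show (β - 2) / 2 = β / 2 - 1 by ring]
  push_cast
  ring

lemma gradient_lyapunov (β : ℝ) (x : E) :
    ∇ (lyapunov β) x = (β * (1 + ‖x‖ ^ 2) ^ ((β - 2) / 2)) • x :=
  (hasGradientAt_lyapunov β x).gradient

lemma abs_lyapunov_add_sub_sub_inner_le {β : ℝ} (hβ0 : 0 ≤ β) (hβ2 : β ≤ 2) (x : E) {z : E}
    (hz : ‖z‖ ≤ 1) :
    |lyapunov β (x + z) - lyapunov β x - ⟪∇ (lyapunov β) x, z⟫| ≤ 5 * ‖z‖ ^ 2 := by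
  set p := β / 2 with hp
  set q := 1 + ‖x‖ ^ 2 with hq
  set δ := (1 + ‖x + z‖ ^ 2) - q with hδ
  have hq0 : 0 < q := by positivity
  have hδ_sq : δ ^ 2 ≤ 5 * q * ‖z‖ ^ 2 := by
    rw [hδ, add_sub_add_left_eq_sub]
    exact sq_norm_add_sq_sub_norm_sq_le x hz
  have htaylor : |(1 + ‖x + z‖ ^ 2) ^ p - q ^ p - p * q ^ (p - 1) * δ| ≤
      (1 - p) * q ^ (p - 2) * δ ^ 2 :=
    abs_rpow_sub_rpow_sub_mul_le hq0 (by positivity) (by linarith) (by linarith)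
  have hinner : ⟪∇ (lyapunov β) x, z⟫ = p * q ^ (p - 1) * (δ - ‖z‖ ^ 2) := by
    rw [gradient_lyapunov, real_inner_smul_left, hδ, hq, norm_add_sq_real, hp,
      show (β - 2) / 2 = β / 2 - 1 by ring]
    ring
  have hpow : q ^ (p - 1) ≤ 1 :=
    Real.rpow_le_one_of_one_le_of_nonpos (by linarith [sq_nonneg ‖x‖]) (by linarith)
  calc |lyapunov β (x + z) - lyapunov β x - ⟪∇ (lyapunov β) x, z⟫|
      = |((1 + ‖x + z‖ ^ 2) ^ p - q ^ p - p * q ^ (p - 1) * δ) + p * q ^ (p - 1) * ‖z‖ ^ 2| := by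
        rw [hinner, lyapunov, lyapunov, ← hp, ← hq]
        congr 1
        ring
    _ ≤ (1 - p) * q ^ (p - 2) * δ ^ 2 + p * q ^ (p - 1) * ‖z‖ ^ 2 :=
        (abs_add_le _ _).trans (add_le_add htaylor (abs_of_nonneg (by positivity)).le)
    _ ≤ (1 - p) * q ^ (p - 2) * (5 * q * ‖z‖ ^ 2) + p * q ^ (p - 1) * ‖z‖ ^ 2 := by
        have : 0 ≤ 1 - p := by linarith
        gcongr
    _ = (5 - 4 * p) * q ^ (p - 1) * ‖z‖ ^ 2 := by
        rw [show p - 1 = (p - 2) + 1 by ring, Real.rpow_add_one hq0.ne']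
        ring
    _ ≤ 5 * 1 * ‖z‖ ^ 2 := by
        gcongr
        linarith
    _ = 5 * ‖z‖ ^ 2 := by ring

end Lyapunov

section Generator

variable {E : Type*} [NormedAddCommGroup E]

/-- The weight `‖z‖ ^ 2` on small jumps and `‖z‖ ^ β` on large ones. Its integrability is the Lévy
condition near the origin together with finiteness of the `β`-th moment at infinity. -/
noncomputable def jumpWeight (β : ℝ) (z : E) : ℝ := if ‖z‖ < 1 then ‖z‖ ^ 2 else ‖z‖ ^ β

variable [InnerProductSpace ℝ E]

lemma exists_inner_self_le {θ K₁ K₂ L : ℝ} (hθ : -2 ≤ θ) (hK₁ : 0 ≤ K₁) (hK₂ : 0 ≤ K₂)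
    {b : E → E} (hb1 : ∀ x, ‖x‖ ≤ L → ⟪b x - b 0, x⟫ ≤ K₁ * ‖x‖ ^ 2)
    (hb2 : ∀ x, L < ‖x‖ → ⟪b x - b 0, x⟫ ≤ -K₂ * ‖x‖ ^ (2 + θ)) :
    ∃ N, ∀ x, ⟪b x, x⟫ ≤ -K₂ * ‖x‖ ^ (2 + θ) + N * (1 + ‖x‖) := by
  set M := K₁ * |L| ^ 2 + K₂ * |L| ^ (2 + θ)
  have hM : 0 ≤ M := by positivity
  refine ⟨‖b 0‖ + M, fun x => ?_⟩
  have hcentered : ⟪b x - b 0, x⟫ ≤ -K₂ * ‖x‖ ^ (2 + θ) + M := by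
    rcases le_or_gt ‖x‖ L with hx | hx
    · have hxL : ‖x‖ ≤ |L| := hx.trans (le_abs_self L)
      have hquadratic : K₁ * ‖x‖ ^ 2 ≤ K₁ * |L| ^ 2 := by gcongr
      have hpower : K₂ * ‖x‖ ^ (2 + θ) ≤ K₂ * |L| ^ (2 + θ) := by
        gcongr
        linarith
      linarith [hb1 x hx]
    · linarith [hb2 x hx]
  have horigin : ⟪b 0, x⟫ ≤ ‖b 0‖ * ‖x‖ := real_inner_le_norm _ _
  rw [inner_sub_left] at hcentered
  nlinarith [norm_nonneg (b 0), norm_nonneg x]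

variable [CompleteSpace E]

/-- The increment of `f` over a jump `z` from `x`, compensated by its linearization on jumps of
norm less than one. -/
noncomputable def compensatedIncrement (f : E → ℝ) (x z : E) : ℝ :=
  f (x + z) - f x - Set.indicator (Set.Ioo (0 : ℝ) 1) (fun _ => ⟪∇ f x, z⟫) ‖z‖

/-- The generator, evaluated on differentiable functions, of the solution of an SDE with drift `b`
driven by a pure-jump Lévy process with Lévy measure `ν`. -/
noncomputable def levyGenerator [MeasurableSpace E] (b : E → E) (ν : Measure E) (f : E → ℝ)
    (x : E) : ℝ :=
  ⟪b x, ∇ f x⟫ + ∫ z, compensatedIncrement f x z ∂ν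

lemma abs_compensatedIncrement_lyapunov_le {β : ℝ} (hβ0 : 0 ≤ β) (hβ2 : β ≤ 2) (x z : E) :
    |compensatedIncrement (lyapunov β) x z| ≤ 5 * √(lyapunov β x) * jumpWeight β z := by
  unfold compensatedIncrement jumpWeight
  split_ifs with hz
  · have hindicator : Set.indicator (Set.Ioo (0 : ℝ) 1) (fun _ => ⟪∇ (lyapunov β) x, z⟫) ‖z‖ =
        ⟪∇ (lyapunov β) x, z⟫ := by
      rcases eq_or_ne z 0 with rfl | hz0
      · simp
      · exact Set.indicator_of_mem (Set.mem_Ioo.2 ⟨norm_pos_iff.2 hz0, hz⟩) _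
    rw [hindicator]
    refine (abs_lyapunov_add_sub_sub_inner_le hβ0 hβ2 x hz.le).trans ?_
    gcongr
    exact le_mul_of_one_le_right (by norm_num) (Real.one_le_sqrt.2 (one_le_lyapunov hβ0 x))
  · rw [Set.indicator_of_notMem fun hmem => hz hmem.2, sub_zero]
    refine (abs_lyapunov_add_sub_le hβ0 hβ2 x (not_lt.1 hz)).trans ?_
    gcongr
    norm_num

lemma inner_gradient_lyapunov_le {β θ κ N : ℝ} (hβ0 : 0 < β) (hβ2 : β ≤ 2) (hθ : -2 ≤ θ)
    (hκ : 0 ≤ κ) {v x : E} (hv : ⟪v, x⟫ ≤ -κ * ‖x‖ ^ (2 + θ) + N * (1 + ‖x‖)) :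
    ⟪v, ∇ (lyapunov β) x⟫ ≤ -(β * κ / 2 ^ ((2 + θ) / 2)) * lyapunov β x ^ (1 + θ / β) +
      β * (κ + 2 * |N|) * √(lyapunov β x) := by
  set q := 1 + ‖x‖ ^ 2 with hq
  have hq1 : 1 ≤ q := le_add_of_nonneg_right (sq_nonneg _)
  have hq0 : 0 < q := one_pos.trans_le hq1
  have hleading : κ / 2 ^ ((2 + θ) / 2) * q ^ ((2 + θ) / 2) ≤ κ * (1 + ‖x‖ ^ (2 + θ)) := by
    rw [div_mul_eq_mul_div, mul_div_assoc]
    gcongr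
    exact (div_le_iff₀' (by positivity)).2 (lyapunov_le (by linarith) x)
  have hlinear : κ + N * (1 + ‖x‖) ≤ (κ + 2 * |N|) * √q := by
    have h1 := one_le_sqrt_one_add_norm_sq x
    have h2 := norm_le_sqrt_one_add_norm_sq x
    calc κ + N * (1 + ‖x‖) ≤ κ * √q + |N| * (√q + √q) := by
          gcongr
          · exact le_mul_of_one_le_right hκ h1
          · exact le_abs_self N
      _ = (κ + 2 * |N|) * √q := by ring
  have hsqrt : q ^ ((β - 2) / 2) * √q ≤ √(lyapunov β x) := by
    rw [lyapunov, ← hq, Real.sqrt_eq_rpow, Real.sqrt_eq_rpow, ← Real.rpow_add hq0,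
      ← Real.rpow_mul hq0.le]
    exact Real.rpow_le_rpow_of_exponent_le hq1 (by linarith)
  have hpower : q ^ ((β - 2) / 2) * q ^ ((2 + θ) / 2) = lyapunov β x ^ (1 + θ / β) := by
    rw [lyapunov, ← hq, ← Real.rpow_add hq0, ← Real.rpow_mul hq0.le]
    congr 1
    field_simp
    ring
  rw [gradient_lyapunov, real_inner_smul_right, ← hq, ← hpower]
  calc β * q ^ ((β - 2) / 2) * ⟪v, x⟫
      ≤ β * q ^ ((β - 2) / 2) *
          (-(κ / 2 ^ ((2 + θ) / 2) * q ^ ((2 + θ) / 2)) + (κ + 2 * |N|) * √q) := by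
        gcongr
        linarith
    _ = -(β * κ / 2 ^ ((2 + θ) / 2)) * (q ^ ((β - 2) / 2) * q ^ ((2 + θ) / 2)) +
          β * (κ + 2 * |N|) * (q ^ ((β - 2) / 2) * √q) := by ring
    _ ≤ _ := by gcongr

variable [MeasurableSpace E] [BorelSpace E]

lemma measurable_compensatedIncrement {f : E → ℝ} (hf : Measurable f) (x : E) :
    Measurable (compensatedIncrement f x) := by
  have hlinear : Measurable ((norm ⁻¹' Set.Ioo (0 : ℝ) 1).indicator fun z => ⟪∇ f x, z⟫) :=
    (by fun_prop : Continuous fun z => ⟪∇ f x, z⟫).measurable.indicator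
      (measurable_norm measurableSet_Ioo)
  exact ((hf.comp (measurable_const_add x)).sub_const _).sub hlinear

lemma integrable_compensatedIncrement_lyapunov {β : ℝ} (hβ0 : 0 ≤ β) (hβ2 : β ≤ 2) {ν : Measure E}
    (hν : Integrable (jumpWeight β) ν) (x : E) :
    Integrable (compensatedIncrement (lyapunov β) x) ν :=
  (hν.const_mul (5 * √(lyapunov β x))).mono'
    (measurable_compensatedIncrement (continuous_lyapunov β).measurable x).aestronglyMeasurable
    (.of_forall (abs_compensatedIncrement_lyapunov_le hβ0 hβ2 x))

lemma integral_compensatedIncrement_lyapunov_le {β : ℝ} (hβ0 : 0 ≤ β) (hβ2 : β ≤ 2) {ν : Measure E}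
    (hν : Integrable (jumpWeight β) ν) (x : E) :
    ∫ z, compensatedIncrement (lyapunov β) x z ∂ν ≤
      5 * (∫ z, jumpWeight β z ∂ν) * √(lyapunov β x) :=
  calc ∫ z, compensatedIncrement (lyapunov β) x z ∂ν
      ≤ ∫ z, 5 * √(lyapunov β x) * jumpWeight β z ∂ν :=
        integral_mono (integrable_compensatedIncrement_lyapunov hβ0 hβ2 hν x) (hν.const_mul _)
          fun z => (le_abs_self _).trans (abs_compensatedIncrement_lyapunov_le hβ0 hβ2 x z)
    _ = 5 * (∫ z, jumpWeight β z ∂ν) * √(lyapunov β x) := by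
        rw [integral_const_mul]
        ring

theorem stmt5_general {β θ κ N : ℝ} (hβ0 : 0 < β) (hβ2 : β ≤ 2) (hθ : -(β / 2) < θ) (hκ : 0 < κ)
    {b : E → E} (hb : ∀ x, ⟪b x, x⟫ ≤ -κ * ‖x‖ ^ (2 + θ) + N * (1 + ‖x‖)) {ν : Measure E}
    (hν : Integrable (jumpWeight β) ν) :
    (∀ x, Integrable (compensatedIncrement (lyapunov β) x) ν) ∧
    ∃ C₁ C₂ : ℝ, 0 < C₁ ∧ 0 < C₂ ∧ ∀ x,
      levyGenerator b ν (lyapunov β) x ≤ -C₁ * lyapunov β x ^ (1 + θ / β) + C₂ := by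
  refine ⟨integrable_compensatedIncrement_lyapunov hβ0.le hβ2 hν, ?_⟩
  set k := β * κ / 2 ^ ((2 + θ) / 2)
  have hk : 0 < k / 2 := by positivity
  have hexponent : 1 / 2 < 1 + θ / β := by
    have : -(1 / 2) < θ / β := (lt_div_iff₀ hβ0).2 (by linarith)
    linarith
  obtain ⟨K, hK, habsorb⟩ := exists_mul_rpow_le_mul_rpow_add (by norm_num) hexponent hk
    (β * (κ + 2 * |N|) + 5 * ∫ z, jumpWeight β z ∂ν)
  refine ⟨k / 2, K, hk, hK, fun x => ?_⟩
  have hdrift := inner_gradient_lyapunov_le hβ0 hβ2 (by linarith) hκ.le (hb x)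
  have hjumps := integral_compensatedIncrement_lyapunov_le hβ0.le hβ2 hν x
  have herror := habsorb (lyapunov β x) (lyapunov_nonneg β x)
  rw [← Real.sqrt_eq_rpow] at herror
  unfold levyGenerator
  linarith

end Generator

section Stable

lemma integrableOn_Ioi_pow_smul_ite_mul_rpow {n : ℕ} (hn : 1 ≤ n) {α β : ℝ} (hα2 : α < 2)
    (hβα : β < α) :
    IntegrableOn (fun r : ℝ => r ^ (n - 1) • ((if r < 1 then r ^ 2 else r ^ β) * r ^ (-(α + n))))
      (Set.Ioi 0) := by
  have hradial (p : ℝ) {r : ℝ} (hr : 0 < r) :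
      r ^ (n - 1) * (r ^ p * r ^ (-(α + n))) = r ^ (p - α - 1) := by
    rw [← Real.rpow_natCast, ← Real.rpow_add hr, ← Real.rpow_add hr, Nat.cast_sub hn]
    congr 1
    push_cast
    ring
  rw [← Set.Ioo_union_Ici_eq_Ioi (zero_lt_one' ℝ), integrableOn_union]
  constructor
  · have hsmall : IntegrableOn (fun r : ℝ => r ^ (2 - α - 1)) (Set.Ioo 0 1) :=
      (intervalIntegral.integrableOn_Ioo_rpow_iff one_pos).2 (by linarith)
    refine hsmall.congr_fun (fun r hr => ?_) measurableSet_Ioo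
    simp only [if_pos hr.2, smul_eq_mul, ← Real.rpow_two, hradial 2 hr.1]
  · have hlarge : IntegrableOn (fun r : ℝ => r ^ (β - α - 1)) (Set.Ici 1) :=
      (integrableOn_Ici_iff_integrableOn_Ioi).2
        (integrableOn_Ioi_rpow_of_lt (by linarith) one_pos)
    refine hlarge.congr_fun (fun r (hr : 1 ≤ r) => ?_) measurableSet_Ici
    simp only [if_neg hr.not_gt, smul_eq_mul, hradial β (one_pos.trans_le hr)]

/-- The normalizing constant `C_{n,α}` of the Lévy measure of the rotationally symmetric `α`-stable
process in dimension `n`. -/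
noncomputable def stableConst (n : ℕ) (α : ℝ) : ℝ :=
  α * (2 : ℝ) ^ (α - 1) * Real.pi ^ (-(n : ℝ) / 2) * Real.Gamma ((n + α) / 2) /
    Real.Gamma (1 - α / 2)

lemma stableConst_pos (n : ℕ) {α : ℝ} (hα0 : 0 < α) (hα2 : α < 2) : 0 < stableConst n α := by
  have hden : 0 < Real.Gamma (1 - α / 2) := Real.Gamma_pos_of_pos (by linarith)
  unfold stableConst
  positivity

/-- The Lévy measure `C_{n,α} ‖z‖ ^ (-(α + n)) dz` of the rotationally symmetric `α`-stable process,
where `n` is the dimension of `E`. -/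
noncomputable def stableLevyMeasure (E : Type*) [NormedAddCommGroup E] [InnerProductSpace ℝ E]
    [FiniteDimensional ℝ E] [MeasurableSpace E] [BorelSpace E] (α : ℝ) : Measure E :=
  ENNReal.ofReal (stableConst (Module.finrank ℝ E) α) •
    (volume.restrict {z : E | z ≠ 0}).withDensity
      fun z => ENNReal.ofReal (‖z‖ ^ (-(α + Module.finrank ℝ E)))

variable {E : Type*} [NormedAddCommGroup E] [InnerProductSpace ℝ E] [FiniteDimensional ℝ E]
  [MeasurableSpace E] [BorelSpace E]

lemma integrable_stableLevyMeasure_iff {α : ℝ} (hα0 : 0 < α) (hα2 : α < 2) {f : E → ℝ} :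
    Integrable f (stableLevyMeasure E α) ↔
      IntegrableOn (fun z => f z * ‖z‖ ^ (-(α + Module.finrank ℝ E))) {z : E | z ≠ 0} := by
  have hconst : ENNReal.ofReal (stableConst (Module.finrank ℝ E) α) ≠ 0 :=
    (ENNReal.ofReal_pos.2 (stableConst_pos _ hα0 hα2)).ne'
  rw [stableLevyMeasure, integrable_smul_measure hconst ENNReal.ofReal_ne_top,
    integrable_withDensity_iff_integrable_smul' (by fun_prop)
      (.of_forall fun _ => ENNReal.ofReal_lt_top), IntegrableOn]
  simp only [ENNReal.toReal_ofReal (Real.rpow_nonneg (norm_nonneg _) _), smul_eq_mul, mul_comm]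

lemma integral_stableLevyMeasure {α : ℝ} (hα0 : 0 < α) (hα2 : α < 2) (f : E → ℝ) :
    ∫ z, f z ∂stableLevyMeasure E α = stableConst (Module.finrank ℝ E) α *
      ∫ z in {z : E | z ≠ 0}, f z * ‖z‖ ^ (-(α + Module.finrank ℝ E)) := by
  rw [stableLevyMeasure, integral_smul_measure,
    integral_withDensity_eq_integral_toReal_smul (by fun_prop)
      (.of_forall fun _ => ENNReal.ofReal_lt_top),
    ENNReal.toReal_ofReal (stableConst_pos _ hα0 hα2).le]
  simp only [ENNReal.toReal_ofReal (Real.rpow_nonneg (norm_nonneg _) _), smul_eq_mul, mul_comm]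

lemma integrable_jumpWeight_stableLevyMeasure [Nontrivial E] {α β : ℝ} (hα0 : 0 < α) (hα2 : α < 2)
    (hβα : β < α) : Integrable (jumpWeight β) (stableLevyMeasure E α) :=
  (integrable_stableLevyMeasure_iff hα0 hα2).2 <| Integrable.integrableOn <|
    (integrable_fun_norm_addHaar volume (f := fun r : ℝ =>
      (if r < 1 then r ^ 2 else r ^ β) * r ^ (-(α + Module.finrank ℝ E)))).2
      (integrableOn_Ioi_pow_smul_ite_mul_rpow Module.finrank_pos hα2 hβα)

end Stable

/-- Lyapunov estimate for the generator of the stable-driven SDE: if `b` satisfies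
Assumption (A) with parameter `θ ≥ 0`, `α ∈ (1,2)` and `β ∈ [1,α)`, then the integral defining
`A V_β(x)` is absolutely convergent and there are constants `C₁, C₂ > 0` with
`A V_β(x) ≤ -C₁ V_β(x)^{1+θ/β} + C₂` for all `x`, where
`A V_β(x) = ⟨b(x), ∇V_β(x)⟩ + C_{d,α} ∫_{ℝ^d∖{0}} (V_β(x+z) - V_β(x)
  - ⟨∇V_β(x), z⟩ 𝟙_{(0,1)}(|z|)) |z|^{-(α+d)} dz`. -/
theorem stmt5 (d : ℕ) (hd : 1 ≤ d) (α θ K₁ K₂ L : ℝ) (hα1 : 1 < α) (hα2 : α < 2)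
    (hθ : 0 ≤ θ) (hK₁ : 0 < K₁) (hK₂ : 0 < K₂) (hL : 0 < L)
    (b : EuclideanSpace ℝ (Fin d) → EuclideanSpace ℝ (Fin d))
    (hb : Differentiable ℝ b)
    (hb1 : ∀ x y : EuclideanSpace ℝ (Fin d), ‖x - y‖ ≤ L →
      ⟪b x - b y, x - y⟫ ≤ K₁ * ‖x - y‖ ^ 2)
    (hb2 : ∀ x y : EuclideanSpace ℝ (Fin d), L < ‖x - y‖ →
      ⟪b x - b y, x - y⟫ ≤ -K₂ * ‖x - y‖ ^ (2 + θ))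
    (β : ℝ) (hβ1 : 1 ≤ β) (hβα : β < α) :
    (∀ x : EuclideanSpace ℝ (Fin d),
      IntegrableOn
        (fun z : EuclideanSpace ℝ (Fin d) =>
          ((1 + ‖x + z‖ ^ 2) ^ (β / 2) - (1 + ‖x‖ ^ 2) ^ (β / 2) -
            Set.indicator (Set.Ioo (0 : ℝ) 1)
              (fun _ => ⟪(β * (1 + ‖x‖ ^ 2) ^ ((β - 2) / 2)) • x, z⟫) ‖z‖) *
            ‖z‖ ^ (-(α + d)))
        {z : EuclideanSpace ℝ (Fin d) | z ≠ 0}) ∧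
    ∃ C₁ C₂ : ℝ, 0 < C₁ ∧ 0 < C₂ ∧ ∀ x : EuclideanSpace ℝ (Fin d),
      ⟪b x, (β * (1 + ‖x‖ ^ 2) ^ ((β - 2) / 2)) • x⟫ +
        (α * (2 : ℝ) ^ (α - 1) * Real.pi ^ (-(d : ℝ) / 2) *
            Real.Gamma ((d + α) / 2) / Real.Gamma (1 - α / 2)) *
          ∫ z in {z : EuclideanSpace ℝ (Fin d) | z ≠ 0},
            ((1 + ‖x + z‖ ^ 2) ^ (β / 2) - (1 + ‖x‖ ^ 2) ^ (β / 2) -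
              Set.indicator (Set.Ioo (0 : ℝ) 1)
                (fun _ => ⟪(β * (1 + ‖x‖ ^ 2) ^ ((β - 2) / 2)) • x, z⟫) ‖z‖) *
              ‖z‖ ^ (-(α + d))
      ≤ -C₁ * ((1 + ‖x‖ ^ 2) ^ (β / 2)) ^ (1 + θ / β) + C₂ := by
  have : Nonempty (Fin d) := ⟨⟨0, hd⟩⟩
  have hα0 : 0 < α := by linarith
  obtain ⟨N, hN⟩ := exists_inner_self_le (θ := θ) (by linarith) hK₁.le hK₂.le
    (fun x => by simpa only [sub_zero] using hb1 x 0)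
    (fun x => by simpa only [sub_zero] using hb2 x 0)
  simpa only [integrable_stableLevyMeasure_iff hα0 hα2, levyGenerator,
    integral_stableLevyMeasure hα0 hα2, compensatedIncrement, gradient_lyapunov, lyapunov,
    stableConst, finrank_euclideanSpace_fin] using
    stmt5_general (by linarith) (by linarith) (by linarith) hK₂ hN
      (integrable_jumpWeight_stableLevyMeasure hα0 hα2 hβα)
end

section
/- Let d ≥ 1, α ∈ (1,2), and 0 < β < α/2. Let f : ℝ^d → ℝ be continuously differentiable, and suppose there is a constant C₀ > 0 such that |f(x)| ≤ C₀(1+|x|²)^{β/2} and |∇f(x)| ≤ C₀(1+|x|²)^{β/2} for all x ∈ ℝ^d. Then there exists a constant C > 0 such that for every x ∈ ℝ^d, ∫_{ℝ^d∖{0}} [f(x+z) − f(x)]² C_{d,α} |z|^{−(α+d)} dz ≤ C (1 + |x|^{2β}), the integral being finite. -/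
open MeasureTheory

/-!
Write `w x = (1 + ‖x‖²) ^ (β / 2)`. Translating by `z` multiplies `w` by at most a constant times
`max 1 ‖z‖ ^ β`. Hence the mean value inequality (for small `z`) and the growth bound (for large
`z`) combine to `‖f (x + z) - f x‖ ≤ A * w x * min ‖z‖ (‖z‖ ^ β)`. The square of the minimum does
not depend on `x` and is integrable against `‖z‖ ^ (-(α + dim E)) dz`: at the origin because
`α < 2`, at infinity because `2 * β < α`.
-/

section Weight

variable {E : Type*} [NormedAddCommGroup E] {β : ℝ}

lemma one_add_norm_add_sq_rpow_le (hβ : 0 ≤ β) (x z : E) :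
    (1 + ‖x + z‖ ^ 2) ^ (β / 2) ≤
      3 ^ (β / 2) * (1 + ‖x‖ ^ 2) ^ (β / 2) * max 1 ‖z‖ ^ β := by
  set m := max 1 ‖z‖
  have hm : 1 ≤ m := le_max_left _ _
  have hsum : ‖x + z‖ ≤ ‖x‖ + m := (norm_add_le x z).trans (by gcongr; exact le_max_right _ _)
  have hbase : 1 + ‖x + z‖ ^ 2 ≤ 3 * (1 + ‖x‖ ^ 2) * m ^ 2 :=
    calc 1 + ‖x + z‖ ^ 2 ≤ 1 + (‖x‖ + m) ^ 2 := by gcongr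
      _ ≤ 1 + 2 * ‖x‖ ^ 2 + 2 * m ^ 2 := by linarith [sq_nonneg (‖x‖ - m)]
      _ ≤ 3 * (1 + ‖x‖ ^ 2) * m ^ 2 := by
        nlinarith [one_le_pow₀ hm (n := 2), sq_nonneg ‖x‖]
  calc (1 + ‖x + z‖ ^ 2) ^ (β / 2) ≤ (3 * (1 + ‖x‖ ^ 2) * m ^ 2) ^ (β / 2) := by gcongr
    _ = 3 ^ (β / 2) * (1 + ‖x‖ ^ 2) ^ (β / 2) * m ^ β := by
      rw [Real.mul_rpow (by positivity) (by positivity),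
        Real.mul_rpow (by positivity) (by positivity), ← Real.rpow_natCast_mul (by positivity),
        Nat.cast_ofNat, mul_div_cancel₀ β two_ne_zero]

lemma one_add_sq_rpow_le {r : ℝ} (hβ0 : 0 ≤ β) (hβ1 : β ≤ 1) (hr : 0 ≤ r) :
    (1 + r ^ 2) ^ β ≤ 1 + r ^ (2 * β) := by
  have h := Real.rpow_add_le_add_rpow zero_le_one (sq_nonneg r) hβ0 hβ1
  rwa [Real.one_rpow, ← Real.rpow_natCast_mul hr] at h

end Weight

section Increment

variable {E F : Type*} [NormedAddCommGroup E] [NormedAddCommGroup F] {β C : ℝ} {f : E → F}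

lemma norm_sub_le_of_norm_fderiv_le_rpow [NormedSpace ℝ E] [NormedSpace ℝ F] (hβ : 0 ≤ β)
    (hf : Differentiable ℝ f) (hf' : ∀ x, ‖fderiv ℝ f x‖ ≤ C * (1 + ‖x‖ ^ 2) ^ (β / 2))
    (x : E) {z : E} (hz : ‖z‖ ≤ 1) :
    ‖f (x + z) - f x‖ ≤ C * (3 ^ (β / 2) * (1 + ‖x‖ ^ 2) ^ (β / 2)) * ‖z‖ := by
  have hC : 0 ≤ C := by simpa using (norm_nonneg _).trans (hf' 0)
  have hbound (y : E) (hy : y ∈ Metric.closedBall x 1) :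
      ‖fderiv ℝ f y‖ ≤ C * (3 ^ (β / 2) * (1 + ‖x‖ ^ 2) ^ (β / 2)) := by
    have hw := one_add_norm_add_sq_rpow_le hβ x (y - x)
    rw [add_sub_cancel, max_eq_left (mem_closedBall_iff_norm.1 hy), Real.one_rpow, mul_one] at hw
    exact (hf' y).trans (by gcongr)
  simpa using (convex_closedBall x 1).norm_image_sub_le_of_norm_fderiv_le (fun y _ => hf y) hbound
    (Metric.mem_closedBall_self zero_le_one) (show x + z ∈ Metric.closedBall x 1 by simpa using hz)

lemma norm_sub_le_of_norm_le_rpow (hβ : 0 ≤ β) (hf : ∀ x, ‖f x‖ ≤ C * (1 + ‖x‖ ^ 2) ^ (β / 2))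
    (x : E) {z : E} (hz : 1 ≤ ‖z‖) :
    ‖f (x + z) - f x‖ ≤ 2 * C * (3 ^ (β / 2) * (1 + ‖x‖ ^ 2) ^ (β / 2)) * ‖z‖ ^ β := by
  have hC : 0 ≤ C := by simpa using (norm_nonneg _).trans (hf 0)
  set w := (1 + ‖x‖ ^ 2) ^ (β / 2)
  have hxz : ‖f (x + z)‖ ≤ C * (3 ^ (β / 2) * w * ‖z‖ ^ β) := by
    have hw := one_add_norm_add_sq_rpow_le hβ x z
    rw [max_eq_right hz] at hw
    exact (hf _).trans (by gcongr)
  have hx : ‖f x‖ ≤ C * (3 ^ (β / 2) * w * ‖z‖ ^ β) := by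
    have h3 : (1 : ℝ) ≤ 3 ^ (β / 2) := Real.one_le_rpow (by norm_num) (by positivity)
    calc ‖f x‖ ≤ C * (1 * w * 1) := by simpa using hf x
      _ ≤ C * (3 ^ (β / 2) * w * ‖z‖ ^ β) := by
        gcongr
        exact Real.one_le_rpow hz hβ
  linarith [norm_sub_le (f (x + z)) (f x)]

lemma norm_sub_le_mul_min [NormedSpace ℝ E] [NormedSpace ℝ F] (hβ0 : 0 ≤ β) (hβ1 : β ≤ 1)
    (hf : Differentiable ℝ f) (hfb : ∀ x, ‖f x‖ ≤ C * (1 + ‖x‖ ^ 2) ^ (β / 2))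
    (hf' : ∀ x, ‖fderiv ℝ f x‖ ≤ C * (1 + ‖x‖ ^ 2) ^ (β / 2)) (x z : E) :
    ‖f (x + z) - f x‖ ≤
      2 * C * (3 ^ (β / 2) * (1 + ‖x‖ ^ 2) ^ (β / 2)) * min ‖z‖ (‖z‖ ^ β) := by
  have hC : 0 ≤ C := by simpa using (norm_nonneg _).trans (hfb 0)
  rcases le_total ‖z‖ 1 with hz | hz
  · rw [min_eq_left (Real.self_le_rpow_of_le_one (norm_nonneg z) hz hβ1)]
    refine (norm_sub_le_of_norm_fderiv_le_rpow hβ0 hf hf' x hz).trans ?_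
    gcongr
    linarith
  · rw [min_eq_right (Real.rpow_le_self_of_one_le hz hβ1)]
    exact norm_sub_le_of_norm_le_rpow hβ0 hfb x hz

lemma norm_sub_sq_le_mul_min_sq [NormedSpace ℝ E] [NormedSpace ℝ F] (hβ0 : 0 ≤ β) (hβ1 : β ≤ 1)
    (hf : Differentiable ℝ f) (hfb : ∀ x, ‖f x‖ ≤ C * (1 + ‖x‖ ^ 2) ^ (β / 2))
    (hf' : ∀ x, ‖fderiv ℝ f x‖ ≤ C * (1 + ‖x‖ ^ 2) ^ (β / 2)) (x z : E) :
    ‖f (x + z) - f x‖ ^ 2 ≤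
      4 * C ^ 2 * 3 ^ β * (1 + ‖x‖ ^ (2 * β)) * min ‖z‖ (‖z‖ ^ β) ^ 2 := by
  have half_sq {t : ℝ} (ht : 0 ≤ t) : (t ^ (β / 2)) ^ 2 = t ^ β := by
    rw [← Real.rpow_mul_natCast ht, Nat.cast_ofNat, div_mul_cancel₀ β two_ne_zero]
  calc ‖f (x + z) - f x‖ ^ 2
      ≤ (2 * C * (3 ^ (β / 2) * (1 + ‖x‖ ^ 2) ^ (β / 2)) * min ‖z‖ (‖z‖ ^ β)) ^ 2 := by
        gcongr
        exact norm_sub_le_mul_min hβ0 hβ1 hf hfb hf' x z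
    _ = 4 * C ^ 2 * 3 ^ β * (1 + ‖x‖ ^ 2) ^ β * min ‖z‖ (‖z‖ ^ β) ^ 2 := by
        simp only [mul_pow, half_sq (show (0 : ℝ) ≤ 3 by norm_num),
          half_sq (show 0 ≤ 1 + ‖x‖ ^ 2 by positivity)]
        ring
    _ ≤ 4 * C ^ 2 * 3 ^ β * (1 + ‖x‖ ^ (2 * β)) * min ‖z‖ (‖z‖ ^ β) ^ 2 := by
        gcongr
        exact one_add_sq_rpow_le hβ0 hβ1 (norm_nonneg x)

end Increment

section Integral

lemma setIntegral_le_integral_of_norm_le {X : Type*} [MeasurableSpace X] {μ : Measure X}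
    {g G : X → ℝ} (hG : Integrable G μ) (hle : ∀ᵐ x ∂μ, ‖g x‖ ≤ G x) (s : Set X) :
    ∫ x in s, g x ∂μ ≤ ∫ x, G x ∂μ :=
  calc ∫ x in s, g x ∂μ ≤ ‖∫ x in s, g x ∂μ‖ := Real.le_norm_self _
    _ ≤ ∫ x in s, G x ∂μ := norm_integral_le_of_norm_le hG.integrableOn (ae_restrict_of_ae hle)
    _ ≤ ∫ x, G x ∂μ :=
      setIntegral_le_integral hG (hle.mono fun x hx => (norm_nonneg (g x)).trans hx)

variable {E : Type*} [NormedAddCommGroup E] [NormedSpace ℝ E] [FiniteDimensional ℝ E]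
  [MeasurableSpace E] [BorelSpace E] (μ : Measure E) [μ.IsAddHaarMeasure]

lemma integrableOn_compl_ball_norm_rpow {r : ℝ} (hr : r < -Module.finrank ℝ E) :
    IntegrableOn (fun z : E => ‖z‖ ^ r) (Metric.ball 0 1)ᶜ μ := by
  have hr0 : r ≤ 0 := by linarith [(Module.finrank ℝ E).cast_nonneg (α := ℝ)]
  have hdom : Integrable (fun z : E => 2 ^ (-r) * (1 + ‖z‖) ^ r) μ := by
    simpa using (integrable_one_add_norm (μ := μ) (lt_neg_of_lt_neg hr)).const_mul (2 ^ (-r))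
  refine hdom.integrableOn.mono' (Measurable.aestronglyMeasurable (by fun_prop)) ?_
  filter_upwards [ae_restrict_mem Metric.isOpen_ball.measurableSet.compl] with z hz
  have hz1 : 1 ≤ ‖z‖ := by simpa using hz
  calc ‖‖z‖ ^ r‖ = 2 ^ (-r) * (2 * ‖z‖) ^ r := by
        rw [Real.norm_of_nonneg (by positivity), Real.mul_rpow two_pos.le (norm_nonneg z),
          ← mul_assoc, ← Real.rpow_add two_pos, neg_add_cancel, Real.rpow_zero, one_mul]
    _ ≤ 2 ^ (-r) * (1 + ‖z‖) ^ r := by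
        gcongr ?_ * ?_
        exact Real.rpow_le_rpow_of_nonpos (by positivity) (by linarith) hr0

variable [Nontrivial E] {α β : ℝ}

lemma integrable_min_sq_mul_norm_rpow (hα : α < 2) (hβ : 2 * β < α) :
    Integrable
      (fun z : E => min ‖z‖ (‖z‖ ^ β) ^ 2 * ‖z‖ ^ (-(α + Module.finrank ℝ E))) μ := by
  set n := Module.finrank ℝ E
  have hmeas : AEStronglyMeasurable
      (fun z : E => min ‖z‖ (‖z‖ ^ β) ^ 2 * ‖z‖ ^ (-(α + n))) μ :=
    Measurable.aestronglyMeasurable (by fun_prop)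
  have hle {z : E} {c : ℝ} (hz : z ≠ 0) (hc : min ‖z‖ (‖z‖ ^ β) ≤ ‖z‖ ^ c) :
      ‖min ‖z‖ (‖z‖ ^ β) ^ 2 * ‖z‖ ^ (-(α + n))‖ ≤ ‖z‖ ^ (c * 2 - (α + n)) := by
    rw [Real.norm_of_nonneg (by positivity), sub_eq_add_neg,
      Real.rpow_add (norm_pos_iff.2 hz), Real.rpow_mul (norm_nonneg z), Real.rpow_two]
    gcongr
  have hne : ∀ᵐ z ∂μ, z ≠ 0 := Measure.ae_ne μ 0
  rw [← integrableOn_univ, ← Set.union_compl_self (Metric.ball 0 1)]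
  refine IntegrableOn.union ?_ ?_
  · refine integrableOn_ball_of_norm_le_rpow (C := 1) (α := α + n - 2) Module.finrank_pos
      (by linarith) (ae_restrict_of_ae ?_) hmeas
    filter_upwards [hne] with z hz
    refine (hle (c := 1) hz (by simp)).trans_eq ?_
    rw [one_mul, one_mul, neg_sub]
  · refine (integrableOn_compl_ball_norm_rpow μ (r := β * 2 - (α + n)) (by linarith)).mono'
      hmeas.restrict (ae_restrict_of_ae ?_)
    filter_upwards [hne] with z hz using hle hz (min_le_right _ _)

theorem stmt11_general {F : Type*} [NormedAddCommGroup F] [NormedSpace ℝ F] {C₀ : ℝ} {f : E → F}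
    (hα : α < 2) (hβ0 : 0 ≤ β) (hβ : β < α / 2) (hf : Differentiable ℝ f)
    (hfb : ∀ x, ‖f x‖ ≤ C₀ * (1 + ‖x‖ ^ 2) ^ (β / 2))
    (hf' : ∀ x, ‖fderiv ℝ f x‖ ≤ C₀ * (1 + ‖x‖ ^ 2) ^ (β / 2)) (K : ℝ) :
    ∃ C : ℝ, 0 < C ∧ ∀ x : E,
      IntegrableOn
        (fun z => ‖f (x + z) - f x‖ ^ 2 * (K * ‖z‖ ^ (-(α + Module.finrank ℝ E)))) {z | z ≠ 0} μ ∧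
      ∫ z in {z | z ≠ 0}, ‖f (x + z) - f x‖ ^ 2 * (K * ‖z‖ ^ (-(α + Module.finrank ℝ E))) ∂μ
        ≤ C * (1 + ‖x‖ ^ (2 * β)) := by
  set n := Module.finrank ℝ E
  let A : ℝ := 4 * C₀ ^ 2 * 3 ^ β * |K|
  let H (z : E) : ℝ := min ‖z‖ (‖z‖ ^ β) ^ 2 * ‖z‖ ^ (-(α + n))
  have hH : Integrable H μ := integrable_min_sq_mul_norm_rpow μ hα (by linarith)
  have hH0 : 0 ≤ ∫ z, H z ∂μ := integral_nonneg fun z => by positivity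
  have hbound (x z : E) : ‖‖f (x + z) - f x‖ ^ 2 * (K * ‖z‖ ^ (-(α + n)))‖ ≤
      A * (1 + ‖x‖ ^ (2 * β)) * H z :=
    calc ‖‖f (x + z) - f x‖ ^ 2 * (K * ‖z‖ ^ (-(α + n)))‖
        = ‖f (x + z) - f x‖ ^ 2 * (|K| * ‖z‖ ^ (-(α + n))) := by
          simp only [norm_mul, norm_pow, norm_norm, Real.norm_eq_abs K,
            Real.norm_rpow_of_nonneg (norm_nonneg z)]
      _ ≤ 4 * C₀ ^ 2 * 3 ^ β * (1 + ‖x‖ ^ (2 * β)) * min ‖z‖ (‖z‖ ^ β) ^ 2 *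
            (|K| * ‖z‖ ^ (-(α + n))) := by
          gcongr
          exact norm_sub_sq_le_mul_min_sq hβ0 (by linarith) hf hfb hf' x z
      _ = A * (1 + ‖x‖ ^ (2 * β)) * H z := by ring
  have hmeas (x : E) :
      AEStronglyMeasurable (fun z => ‖f (x + z) - f x‖ ^ 2 * (K * ‖z‖ ^ (-(α + n)))) μ := by
    have hcont : Continuous fun z => ‖f (x + z) - f x‖ := by
      have := hf.continuous
      fun_prop
    have := hcont.measurable
    exact Measurable.aestronglyMeasurable (by fun_prop)
  refine ⟨A * (∫ z, H z ∂μ) + 1, add_pos_of_nonneg_of_pos (mul_nonneg (by positivity) hH0) one_pos,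
    fun x => ?_⟩
  have hdom : Integrable (fun z => A * (1 + ‖x‖ ^ (2 * β)) * H z) μ := hH.const_mul _
  refine ⟨(hdom.mono' (hmeas x) (ae_of_all _ (hbound x))).integrableOn, ?_⟩
  calc ∫ z in {z | z ≠ 0}, ‖f (x + z) - f x‖ ^ 2 * (K * ‖z‖ ^ (-(α + n))) ∂μ
      ≤ ∫ z, A * (1 + ‖x‖ ^ (2 * β)) * H z ∂μ :=
        setIntegral_le_integral_of_norm_le hdom (ae_of_all _ (hbound x)) _
    _ = A * (∫ z, H z ∂μ) * (1 + ‖x‖ ^ (2 * β)) := by rw [integral_const_mul]; ring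
    _ ≤ (A * (∫ z, H z ∂μ) + 1) * (1 + ‖x‖ ^ (2 * β)) := by gcongr; linarith

end Integral

/-- Carré-du-champ bound: for `α ∈ (1,2)`, `0 < β < α/2`, and `f ∈ C¹(ℝ^d)` with
`|f(x)| ≤ C₀(1+|x|²)^{β/2}` and `|∇f(x)| ≤ C₀(1+|x|²)^{β/2}`, there is `C > 0` such that
`∫_{ℝ^d∖{0}} [f(x+z) - f(x)]² C_{d,α} |z|^{-(α+d)} dz ≤ C(1+|x|^{2β})` for all `x`,
the integral being finite. -/
theorem stmt11 (d : ℕ) (hd : 1 ≤ d) (α β C₀ : ℝ) (hα1 : 1 < α) (hα2 : α < 2)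
    (hβ0 : 0 < β) (hβ : β < α / 2) (hC₀ : 0 < C₀)
    (f : EuclideanSpace ℝ (Fin d) → ℝ) (hf : ContDiff ℝ 1 f)
    (hfb : ∀ x, |f x| ≤ C₀ * (1 + ‖x‖ ^ 2) ^ (β / 2))
    (hgb : ∀ x, ‖gradient f x‖ ≤ C₀ * (1 + ‖x‖ ^ 2) ^ (β / 2)) :
    ∃ C : ℝ, 0 < C ∧ ∀ x : EuclideanSpace ℝ (Fin d),
      IntegrableOn
        (fun z : EuclideanSpace ℝ (Fin d) => (f (x + z) - f x) ^ 2 *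
          ((α * (2 : ℝ) ^ (α - 1) * Real.pi ^ (-(d : ℝ) / 2) *
            Real.Gamma ((d + α) / 2) / Real.Gamma (1 - α / 2)) * ‖z‖ ^ (-(α + d))))
        {z : EuclideanSpace ℝ (Fin d) | z ≠ 0} ∧
      ∫ z in {z : EuclideanSpace ℝ (Fin d) | z ≠ 0},
          (f (x + z) - f x) ^ 2 *
            ((α * (2 : ℝ) ^ (α - 1) * Real.pi ^ (-(d : ℝ) / 2) *
              Real.Gamma ((d + α) / 2) / Real.Gamma (1 - α / 2)) * ‖z‖ ^ (-(α + d)))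
        ≤ C * (1 + ‖x‖ ^ (2 * β)) := by
  have : Nonempty (Fin d) := ⟨⟨0, hd⟩⟩
  simpa only [Real.norm_eq_abs, sq_abs, finrank_euclideanSpace_fin] using
    stmt11_general volume hα2 hβ0.le hβ (hf.differentiable one_ne_zero) hfb
      (by simpa [gradient] using hgb) _
end
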